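/- arXiv:1005.0724 — 4 statements merged into one kernel-verified Lean document; each statement's English description precedes it below -/
import Mathlib

section
/- Let mu, mu' : Q_p^* -> C^* be unramified group homomorphisms and set alpha = mu(p)^{-1} * sqrt(p) and beta = mu'(p)^{-1} / sqrt(p) (complex numbers). Let v : G -> C be a function such that v(b*g) = mu(a) * mu'(d) * |a/d|^{1/2} * v(g) for every b = [[a,b0],[0,d]] in B and every g in G, such that v(g*k) = v(g) for every k in K and g in G, and such that v(1) = 1. Then for every integer r >= 0 and every k in K: if k lies in I_s \ I_{s+1} for some 0 <= s <= r-1 then v(k * gamma^r) = alpha^s * beta^{r-s}, and if k lies in I_r then v(k * gamma^r) = alpha^r. -/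
open Matrix

noncomputable section

variable (p : ℕ) [Fact p.Prime]

/-- The underlying matrix of an element of `GL₂(ℚ_p)`. -/
def mat (g : GL (Fin 2) ℚ_[p]) : Matrix (Fin 2) (Fin 2) ℚ_[p] := g

/-- Membership in `K = GL₂(ℤ_p)`: all entries are `p`-adic integers and the
determinant is a unit of `ℤ_p`. -/
def inK (g : GL (Fin 2) ℚ_[p]) : Prop :=
  (∀ i j, ‖mat p g i j‖ ≤ 1) ∧ ‖(mat p g).det‖ = 1

/-- Membership in the Iwahori subgroup `I_n` of `K`: for `n = 0`, `I_0 = K`;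
for `n ≥ 1`, the diagonal entries are units of `ℤ_p` and the lower left entry
lies in `p^n ℤ_p`. -/
def inI (n : ℕ) (g : GL (Fin 2) ℚ_[p]) : Prop :=
  inK p g ∧ (n = 0 ∨
    (‖mat p g 0 0‖ = 1 ∧ ‖mat p g 1 1‖ = 1 ∧ ‖mat p g 1 0‖ ≤ (p : ℝ) ^ (-(n : ℤ))))

/-- `p` as a unit of `ℚ_p`. -/
def pu : ℚ_[p]ˣ :=
  Units.mk0 (p : ℚ_[p]) (by exact_mod_cast (Fact.out : p.Prime).ne_zero)

/-- The element `γ = diag(p⁻¹, 1)` of `GL₂(ℚ_p)`. -/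
def gamma : GL (Fin 2) ℚ_[p] :=
  Matrix.GeneralLinearGroup.mkOfDetNeZero !![(p : ℚ_[p])⁻¹, 0; 0, 1] (by
    have hp : (p : ℚ_[p]) ≠ 0 := by exact_mod_cast (Fact.out : p.Prime).ne_zero
    simp [Matrix.det_fin_two_of, hp])

/-- A character of `ℚ_p^×` is unramified if it is trivial on `ℤ_p^×`. -/
def Unramified (μ : ℚ_[p]ˣ →* ℂˣ) : Prop :=
  ∀ u : ℚ_[p]ˣ, ‖(u : ℚ_[p])‖ = 1 → μ u = 1

lemma chi_eq (μ : ℚ_[p]ˣ →* ℂˣ) (hμ : Unramified p μ) (a : ℚ_[p]ˣ) (m : ℕ)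
    (h : ‖(a : ℚ_[p])‖ = (p : ℝ) ^ m) : (μ a : ℂ) = ((μ (pu p) : ℂ)⁻¹) ^ m := by
  have hp : (p : ℝ) ≠ 0 := by exact_mod_cast (Fact.out : p.Prime).ne_zero
  have h1 : μ (a * pu p ^ m) = 1 := by
    apply hμ
    simp [pu, h, hp]
  rw [map_mul, map_pow] at h1
  have h2 : μ a = ((μ (pu p))⁻¹) ^ m := by
    rw [inv_pow]; exact eq_inv_of_mul_eq_one_left h1
  rw [h2]; simp

lemma key (μ μ' : ℚ_[p]ˣ →* ℂˣ)
    (hμ : Unramified p μ) (hμ' : Unramified p μ')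
    (α β : ℂ)
    (hα : α = ((μ (pu p) : ℂ))⁻¹ * (Real.sqrt p : ℂ))
    (hβ : β = ((μ' (pu p) : ℂ))⁻¹ / (Real.sqrt p : ℂ))
    (v : GL (Fin 2) ℚ_[p] → ℂ)
    (hvB : ∀ (b g : GL (Fin 2) ℚ_[p]) (a d : ℚ_[p]ˣ),
      mat p b 1 0 = 0 → mat p b 0 0 = a → mat p b 1 1 = d →
      v (b * g) = (μ a : ℂ) * (μ' d : ℂ) *
        (Real.sqrt ‖(a : ℚ_[p]) / (d : ℚ_[p])‖ : ℂ) * v g)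
    (hvK : ∀ (g k : GL (Fin 2) ℚ_[p]), inK p k → v (g * k) = v g)
    (hv1 : v 1 = 1) (h k : GL (Fin 2) ℚ_[p]) (hk : inK p k) (x y z : ℚ_[p]) (m n : ℕ)
    (hx : ‖x‖ = (p : ℝ) ^ m) (hz : ‖z‖ = (p : ℝ) ^ n)
    (hh : mat p h = !![x, y; 0, z] * mat p k) : v h = α ^ m * β ^ n := by
  have hp : (0 : ℝ) < p := by exact_mod_cast (Fact.out : p.Prime).pos
  have hx0 : x ≠ 0 := by
    rw [← norm_pos_iff, hx]; positivity
  have hz0 : z ≠ 0 := by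
    rw [← norm_pos_iff, hz]; positivity
  let b : GL (Fin 2) ℚ_[p] := Matrix.GeneralLinearGroup.mkOfDetNeZero !![x, y; 0, z] (by
    simp [Matrix.det_fin_two_of, hx0, hz0])
  have hb : mat p b = !![x, y; 0, z] := rfl
  have e : h = b * k := by
    apply Units.ext
    exact hh
  have h1 : v k = 1 := by rw [← one_mul k, hvK 1 k hk, hv1]
  rw [e, hvB b k (Units.mk0 x hx0) (Units.mk0 z hz0) (by simp [hb]) (by simp [hb])
    (by simp [hb]), h1, chi_eq p μ hμ _ m (by simpa using hx), chi_eq p μ' hμ' _ n (by simpa using hz)]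
  have hs : Real.sqrt ‖x / z‖ = Real.sqrt p ^ m / Real.sqrt p ^ n := by
    rw [norm_div, hx, hz, Real.sqrt_div (by positivity)]
    congr 1 <;>
    · rw [Real.sqrt_eq_iff_mul_self_eq (by positivity) (by positivity), ← mul_pow,
        Real.mul_self_sqrt hp.le]
  simp only [Units.val_mk0, hs, hα, hβ]
  push_cast
  rw [mul_pow, div_pow]
  ring

lemma gamma_pow (r : ℕ) : mat p (gamma p ^ r) = !![((p : ℚ_[p])⁻¹) ^ r, 0; 0, 1] := by
  induction r with
  | zero => simp [mat, Matrix.one_fin_two]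
  | succ r ih =>
    have : mat p (gamma p ^ (r+1)) = mat p (gamma p ^ r) * mat p (gamma p) := by
      rw [pow_succ]; rfl
    rw [this, ih]
    have : mat p (gamma p) = !![(p : ℚ_[p])⁻¹, 0; 0, 1] := rfl
    rw [this, Matrix.mul_fin_two]
    simp [pow_succ]

lemma c_norm (s : ℕ) (k : GL (Fin 2) ℚ_[p]) (h : inI p s k) (h' : ¬ inI p (s + 1) k) :
    ‖mat p k 1 0‖ = (p : ℝ) ^ (-(s : ℤ)) := by
  obtain ⟨hK, h⟩ := h
  obtain ⟨hi, hd⟩ := id hK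
  have hle : ‖mat p k 1 0‖ ≤ (p : ℝ) ^ (-(s : ℤ)) := by
    rcases h with rfl | h
    · simpa using hi 1 0
    · exact h.2.2
  apply le_antisymm hle
  by_contra hlt
  push Not at hlt
  have hc : ‖mat p k 1 0‖ ≤ (p : ℝ) ^ (-((s + 1 : ℕ) : ℤ)) := by
    rw [Padic.norm_le_pow_iff_norm_lt_pow_add_one]
    have e : (-((s + 1 : ℕ) : ℤ)) + 1 = -(s : ℤ) := by push_cast; ring
    rwa [e]
  apply h'
  refine ⟨hK, Or.inr ?_⟩
  rcases h with rfl | h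
  · have hlt1 : ‖mat p k 1 0‖ < 1 := by simpa using hlt
    have hbc : ‖mat p k 0 1 * mat p k 1 0‖ < 1 := by
      rw [norm_mul]
      nlinarith [hi 0 1, norm_nonneg (mat p k 0 1), norm_nonneg (mat p k 1 0)]
    have had : ¬ ‖mat p k 0 0 * mat p k 1 1‖ < 1 := by
      intro hlt2
      rw [Matrix.det_fin_two, sub_eq_add_neg] at hd
      have := Padic.nonarchimedean (mat p k 0 0 * mat p k 1 1) (-(mat p k 0 1 * mat p k 1 0))
      rw [hd, norm_neg] at this
      rcases le_max_iff.1 this with h | h <;> linarith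
    rw [norm_mul] at had
    push Not at had
    have n0 := norm_nonneg (mat p k 0 0)
    have n1 := norm_nonneg (mat p k 1 1)
    have i0 := hi 0 0
    have i1 := hi 1 1
    refine ⟨le_antisymm i0 ?_, le_antisymm i1 ?_, hc⟩ <;> nlinarith
  · exact ⟨h.1, h.2.1, hc⟩

/-- Lemma «calcul-NR», first part: values of the translates `γ^r · v` of the
(normalized) new vector `v` of the unramified principal series
`Ind_B^G (μ ⊗ μ')` at elements of `K`. -/
theorem stmt0 (μ μ' : ℚ_[p]ˣ →* ℂˣ)
    (hμ : Unramified p μ) (hμ' : Unramified p μ')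
    (α β : ℂ)
    (hα : α = ((μ (pu p) : ℂ))⁻¹ * (Real.sqrt p : ℂ))
    (hβ : β = ((μ' (pu p) : ℂ))⁻¹ / (Real.sqrt p : ℂ))
    (v : GL (Fin 2) ℚ_[p] → ℂ)
    (hvB : ∀ (b g : GL (Fin 2) ℚ_[p]) (a d : ℚ_[p]ˣ),
      mat p b 1 0 = 0 → mat p b 0 0 = a → mat p b 1 1 = d →
      v (b * g) = (μ a : ℂ) * (μ' d : ℂ) *
        (Real.sqrt ‖(a : ℚ_[p]) / (d : ℚ_[p])‖ : ℂ) * v g)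
    (hvK : ∀ (g k : GL (Fin 2) ℚ_[p]), inK p k → v (g * k) = v g)
    (hv1 : v 1 = 1) :
    ∀ (r : ℕ) (k : GL (Fin 2) ℚ_[p]),
      (∀ s : ℕ, s + 1 ≤ r → inI p s k → ¬ inI p (s + 1) k →
        v (k * gamma p ^ r) = α ^ s * β ^ (r - s)) ∧
      (inI p r k → v (k * gamma p ^ r) = α ^ r) := by
  intro r k
  have hp : (0 : ℝ) < p := by exact_mod_cast (Fact.out : p.Prime).pos
  have hp0 : (p : ℚ_[p]) ≠ 0 := by exact_mod_cast (Fact.out : p.Prime).ne_zero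
  have hm : mat p (k * gamma p ^ r) = !![mat p k 0 0 * ((p : ℚ_[p])⁻¹) ^ r, mat p k 0 1;
      mat p k 1 0 * ((p : ℚ_[p])⁻¹) ^ r, mat p k 1 1] := by
    have : mat p (k * gamma p ^ r) = mat p k * mat p (gamma p ^ r) := rfl
    rw [this, gamma_pow, Matrix.eta_fin_two (mat p k), Matrix.mul_fin_two]
    simp
  refine ⟨fun s hs h h' => ?_, fun h => ?_⟩
  · have hc := c_norm p s k h h'
    obtain ⟨⟨hi, hd⟩, -⟩ := h
    have hc0 : mat p k 1 0 ≠ 0 := by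
      rw [← norm_pos_iff, hc]; positivity
    set a := mat p k 0 0
    set b := mat p k 0 1
    set c := mat p k 1 0
    set d := mat p k 1 1
    obtain ⟨t, rfl⟩ := Nat.exists_eq_add_of_le (by omega : s ≤ r)
    rw [Nat.add_sub_cancel_left]
    have hdet : (!![0, 1; 1, d * (p : ℚ_[p]) ^ (s + t) / c]).det ≠ 0 := by
      simp [Matrix.det_fin_two_of]
    have he : ‖d * (p : ℚ_[p]) ^ (s + t) / c‖ ≤ 1 := by
      have h1 : ‖d * (p : ℚ_[p]) ^ (s + t) / c‖ = ‖d‖ * ((p : ℝ)⁻¹) ^ t := by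
        rw [norm_div, norm_mul, norm_pow, hc, Padic.norm_p, _root_.zpow_neg, zpow_natCast, pow_add, inv_pow, inv_pow]
        field_simp
      rw [h1]
      have h2 : ((p : ℝ)⁻¹) ^ t ≤ 1 := by
        apply pow_le_one₀ (by positivity)
        apply inv_le_one_of_one_le₀
        exact_mod_cast (Fact.out : p.Prime).one_lt.le
      exact mul_le_one₀ (hi 1 1) (by positivity) h2
    refine key p μ μ' hμ hμ' α β hα hβ v hvB hvK hv1 _
      (Matrix.GeneralLinearGroup.mkOfDetNeZero _ hdet) ?_ (-(mat p k).det / c)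
      (a * ((p : ℚ_[p])⁻¹) ^ (s + t)) (c * ((p : ℚ_[p])⁻¹) ^ (s + t)) s t ?_ ?_ ?_
    · have hmm : mat p (Matrix.GeneralLinearGroup.mkOfDetNeZero _ hdet) =
        !![0, 1; 1, d * (p : ℚ_[p]) ^ (s + t) / c] := rfl
      refine ⟨?_, ?_⟩
      · rw [hmm]
        intro i j
        fin_cases i <;> fin_cases j
        · simp
        · simp
        · simp
        · simpa using he
      · rw [hmm]; simp [Matrix.det_fin_two_of]
    · rw [norm_div, norm_neg, hd, hc]; simp
    · rw [norm_mul, hc, norm_pow, norm_inv, Padic.norm_p, _root_.zpow_neg, zpow_natCast, pow_add, inv_inv]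
      field_simp
    · have hmm : mat p (Matrix.GeneralLinearGroup.mkOfDetNeZero _ hdet) =
        !![0, 1; 1, d * (p : ℚ_[p]) ^ (s + t) / c] := rfl
      rw [hmm, hm, Matrix.mul_fin_two, Matrix.det_fin_two]
      change _ = !![_, -(a * d - b * c) / c * 1 + _; _, _]
      congr 1
      ext i j
      fin_cases i <;> fin_cases j <;> simp <;> field_simp <;> ring
  · obtain ⟨hK, h⟩ := h
    rcases h with rfl | ⟨h0, h1, hc⟩
    · simp only [pow_zero]
      rw [← one_mul k, mul_one, hvK 1 k hK, hv1]
    obtain ⟨hi, hd⟩ := id hK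
    have hd0 : mat p k 1 1 ≠ 0 := by
      rw [← norm_pos_iff, h1]; positivity
    set a := mat p k 0 0
    set b := mat p k 0 1
    set c := mat p k 1 0
    set d := mat p k 1 1
    have hdet : (!![1, 0; c * ((p : ℚ_[p])⁻¹) ^ r / d, 1]).det ≠ 0 := by
      simp [Matrix.det_fin_two_of]
    have hmm : mat p (Matrix.GeneralLinearGroup.mkOfDetNeZero _ hdet) =
        !![1, 0; c * ((p : ℚ_[p])⁻¹) ^ r / d, 1] := rfl
    have he : ‖c * ((p : ℚ_[p])⁻¹) ^ r / d‖ ≤ 1 := by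
      rw [norm_div, h1, norm_mul, norm_pow, norm_inv, Padic.norm_p, inv_inv, div_one]
      rw [_root_.zpow_neg, zpow_natCast] at hc
      calc _ ≤ ((p : ℝ) ^ r)⁻¹ * (p : ℝ) ^ r := by gcongr
        _ = 1 := by field_simp
    have := key p μ μ' hμ hμ' α β hα hβ v hvB hvK hv1 (k * gamma p ^ r)
      (Matrix.GeneralLinearGroup.mkOfDetNeZero _ hdet) ?_
      ((mat p k).det * ((p : ℚ_[p])⁻¹) ^ r / d) b d r 0 ?_ ?_ ?_
    · simpa using this
    · refine ⟨?_, ?_⟩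
      · rw [hmm]
        intro i j
        fin_cases i <;> fin_cases j
        · simp
        · simp
        · simpa using he
        · simp
      · rw [hmm]; simp [Matrix.det_fin_two_of]
    · rw [norm_div, norm_mul, hd, h1]; simp
    · simpa using h1
    · rw [hmm, hm, Matrix.mul_fin_two, Matrix.det_fin_two]
      change _ = !![(a * d - b * c) * _ / d * 1 + _, _; _, _]
      congr 1
      ext i j
      fin_cases i <;> fin_cases j <;> simp <;> field_simp <;> ring
end
end

section
/- Let mu, mu' : Q_p^* -> C^* be unramified group homomorphisms and set alpha = mu(p)^{-1} * sqrt(p) and beta = mu'(p)^{-1} / sqrt(p). Let v : G -> C be a function such that v(b*g) = mu(a) * mu'(d) * |a/d|^{1/2} * v(g) for every b = [[a,b0],[0,d]] in B and every g in G, such that v(g*k) = v(g) for every k in K and g in G, and such that v(1) = 1. Then for every integer r >= 1 and every k in K: (a) if k lies in I_s \ I_{s+1} with 0 <= s <= r-1 then v(k*gamma^r) - alpha * v(k*gamma^{r-1}) = alpha^s * beta^{r-s} - alpha^{s+1} * beta^{r-1-s}, and if k lies in I_r then v(k*gamma^r) - alpha * v(k*gamma^{r-1}) = 0; (b) if k lies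 in I_r then v(k*gamma^r) - beta * v(k*gamma^{r-1}) = alpha^r * (1 - beta/alpha), and if k lies in K \ I_r then v(k*gamma^r) - beta * v(k*gamma^{r-1}) = 0. -/
open Matrix

noncomputable section

variable (p : ℕ) [Fact p.Prime]

lemma aux_char (χ : ℚ_[p]ˣ →* ℂˣ) (h : Unramified p χ) (x : ℚ_[p]ˣ) (s : ℕ)
    (hx : ‖(x : ℚ_[p])‖ = (p : ℝ) ^ s) : (χ x : ℂ) = ((χ (pu p) : ℂ))⁻¹ ^ s := by
  have hp : (p : ℝ) ≠ 0 := by exact_mod_cast (Fact.out : p.Prime).ne_zero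
  have h1 : χ (x * pu p ^ s) = 1 := by
    apply h
    simp [pu, hx]
  rw [map_mul, map_pow] at h1
  have h2 : χ x = (χ (pu p))⁻¹ ^ s := by
    rw [inv_pow]; exact eq_inv_of_mul_eq_one_left h1
  rw [h2]; simp

lemma aux_B (μ μ' : ℚ_[p]ˣ →* ℂˣ)
    (hμ : Unramified p μ) (hμ' : Unramified p μ')
    (α β : ℂ)
    (hα : α = ((μ (pu p) : ℂ))⁻¹ * (Real.sqrt p : ℂ))
    (hβ : β = ((μ' (pu p) : ℂ))⁻¹ / (Real.sqrt p : ℂ))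
    (a d : ℚ_[p]ˣ) (s t : ℕ) (ha : ‖(a : ℚ_[p])‖ = (p : ℝ) ^ s)
    (hd : ‖(d : ℚ_[p])‖ = (p : ℝ) ^ t) :
    (μ a : ℂ) * (μ' d : ℂ) * (Real.sqrt ‖(a : ℚ_[p]) / (d : ℚ_[p])‖ : ℂ) = α ^ s * β ^ t := by
  rw [aux_char p μ hμ a s ha, aux_char p μ' hμ' d t hd, hα, hβ, norm_div, ha, hd]
  have hp : (0 : ℝ) ≤ p := by positivity
  have hs : ∀ n : ℕ, Real.sqrt ((p : ℝ) ^ n) = Real.sqrt p ^ n := by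
    intro n
    rw [Real.sqrt_eq_iff_mul_self_eq (by positivity) (by positivity), ← mul_pow,
      Real.mul_self_sqrt hp]
  rw [Real.sqrt_div (by positivity), hs, hs]
  push_cast
  rw [mul_pow, div_pow]
  ring

lemma aux_gamma (n : ℕ) : mat p (gamma p ^ n) = !![((p : ℚ_[p]) ^ n)⁻¹, 0; 0, 1] := by
  induction n with
  | zero => simp [mat, Matrix.one_fin_two]
  | succ n ih =>
    have : mat p (gamma p ^ (n + 1)) = mat p (gamma p ^ n) * mat p (gamma p) := by
      simp [mat, pow_succ]
    rw [this, ih]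
    simp [mat, gamma, Matrix.GeneralLinearGroup.mkOfDetNeZero, pow_succ, mul_comm]

lemma aux_c (k : GL (Fin 2) ℚ_[p]) (s : ℕ) (h : inI p s k) (h' : ¬ inI p (s + 1) k) :
    ‖mat p k 1 0‖ = ((p : ℝ) ^ s)⁻¹ := by
  have hp1 : (1 : ℝ) < p := by exact_mod_cast (Fact.out : p.Prime).one_lt
  obtain ⟨hK, hs⟩ := h
  have hle : ‖mat p k 1 0‖ ≤ (p : ℝ) ^ (-(s : ℤ)) := by
    rcases hs with rfl | hs
    · simpa using hK.1 1 0
    · exact hs.2.2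
  by_contra hne
  have hlt : ‖mat p k 1 0‖ < (p : ℝ) ^ (-(s : ℤ)) := by
    refine lt_of_le_of_ne hle ?_
    simpa using hne
  have hle2 := (Padic.norm_lt_pow_iff_norm_le_pow_sub_one _ _).1 hlt
  have hlt1 : ‖mat p k 1 0‖ < 1 := by
    refine lt_of_lt_of_le hlt ?_
    rw [_root_.zpow_neg, zpow_natCast]
    exact inv_le_one_of_one_le₀ (one_le_pow₀ hp1.le)
  apply h'
  refine ⟨hK, Or.inr ?_⟩
  have hdet := hK.2
  rw [Matrix.det_fin_two] at hdet
  have h00 := hK.1 0 0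
  have h01 := hK.1 0 1
  have h11 := hK.1 1 1
  have hbc : ‖mat p k 0 1 * mat p k 1 0‖ < 1 := by
    rw [norm_mul]
    nlinarith [norm_nonneg (mat p k 0 1), norm_nonneg (mat p k 1 0)]
  have had : 1 ≤ ‖mat p k 0 0 * mat p k 1 1‖ := by
    have := Padic.nonarchimedean (mat p k 0 0 * mat p k 1 1 - mat p k 0 1 * mat p k 1 0)
      (mat p k 0 1 * mat p k 1 0)
    have h3 := Padic.nonarchimedean (mat p k 0 0 * mat p k 1 1) (-(mat p k 0 1 * mat p k 1 0))
    rw [← sub_eq_add_neg, hdet, norm_neg, le_max_iff] at h3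
    rcases h3 with h3 | h3
    · exact h3
    · linarith
  rw [norm_mul] at had
  refine ⟨?_, ?_, ?_⟩
  · nlinarith [norm_nonneg (mat p k 0 0), norm_nonneg (mat p k 1 1)]
  · nlinarith [norm_nonneg (mat p k 0 0), norm_nonneg (mat p k 1 1)]
  · convert hle2 using 2
    push_cast; ring

lemma aux_decomp (k : GL (Fin 2) ℚ_[p]) (s n : ℕ) (hsn : s ≤ n) (hK : inK p k)
    (hc : ‖mat p k 1 0‖ = ((p : ℝ) ^ s)⁻¹) :
    ∃ (b k' : GL (Fin 2) ℚ_[p]) (a d : ℚ_[p]ˣ), mat p b 1 0 = 0 ∧ mat p b 0 0 = a ∧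
      mat p b 1 1 = d ∧ ‖(a : ℚ_[p])‖ = (p : ℝ) ^ s ∧ ‖(d : ℚ_[p])‖ = (p : ℝ) ^ (n - s) ∧
      inK p k' ∧ k * gamma p ^ n = b * k' := by
  have hp : (p : ℝ) ≠ 0 := by exact_mod_cast (Fact.out : p.Prime).ne_zero
  have hp1 : (1 : ℝ) < p := by exact_mod_cast (Fact.out : p.Prime).one_lt
  have hq : (p : ℚ_[p]) ≠ 0 := by exact_mod_cast (Fact.out : p.Prime).ne_zero
  obtain ⟨t, rfl⟩ := Nat.exists_eq_add_of_le hsn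
  have hm : mat p (k * gamma p ^ (s + t)) = mat p k * mat p (gamma p ^ (s + t)) := by simp [mat]
  rw [aux_gamma] at hm
  obtain ⟨hK1, hK2⟩ := hK
  rw [Matrix.det_fin_two] at hK2
  have h11 := hK1 1 1
  generalize hA : mat p k 0 0 = A at *
  generalize hB : mat p k 0 1 = B at *
  generalize hC : mat p k 1 0 = C at *
  generalize hD : mat p k 1 1 = D at *
  have hkm : mat p k = !![A, B; C, D] := by
    rw [← hA, ← hB, ← hC, ← hD]; exact Matrix.eta_fin_two _
  have hC0 : C ≠ 0 := by
    rintro rfl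
    simp only [norm_zero] at hc
    exact (inv_ne_zero (pow_ne_zero s hp)) hc.symm
  have hdet0 : A * D - B * C ≠ 0 := by
    intro h; rw [h] at hK2; simp at hK2
  have hx0 : -(A * D - B * C) / C ≠ 0 := div_ne_zero (neg_ne_zero.2 hdet0) hC0
  have hd0 : ((p : ℚ_[p]) ^ t)⁻¹ ≠ 0 := inv_ne_zero (pow_ne_zero _ hq)
  have hc'0 : C * ((p : ℚ_[p]) ^ s)⁻¹ ≠ 0 := mul_ne_zero hC0 (inv_ne_zero (pow_ne_zero _ hq))
  refine ⟨Matrix.GeneralLinearGroup.mkOfDetNeZero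
      !![-(A * D - B * C) / C, A * ((p : ℚ_[p]) ^ t)⁻¹ / C; 0, ((p : ℚ_[p]) ^ t)⁻¹] ?_,
    Matrix.GeneralLinearGroup.mkOfDetNeZero
      !![0, 1; C * ((p : ℚ_[p]) ^ s)⁻¹, D * (p : ℚ_[p]) ^ t] ?_,
    Units.mk0 _ hx0, Units.mk0 _ hd0, ?_, ?_, ?_, ?_, ?_, ?_, ?_⟩
  · rw [Matrix.det_fin_two_of]; rw [mul_zero, sub_zero]; exact mul_ne_zero hx0 hd0
  · rw [Matrix.det_fin_two_of]; rw [zero_mul, zero_sub, one_mul]; exact neg_ne_zero.2 hc'0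
  · simp [mat, Matrix.GeneralLinearGroup.mkOfDetNeZero]
  · simp [mat, Matrix.GeneralLinearGroup.mkOfDetNeZero]
  · simp [mat, Matrix.GeneralLinearGroup.mkOfDetNeZero]
  · rw [Units.val_mk0, norm_div, norm_neg, hK2, hc]; simp
  · simp
  · have hn : ‖C * ((p : ℚ_[p]) ^ s)⁻¹‖ = 1 := by
      rw [norm_mul, hc]; simp [hp]
    have hn2 : ‖D * (p : ℚ_[p]) ^ t‖ ≤ 1 := by
      rw [norm_mul, norm_pow, Padic.norm_p]
      exact mul_le_one₀ h11 (by positivity) (pow_le_one₀ (by positivity) (inv_le_one_of_one_le₀ hp1.le))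
    constructor
    · intro i j
      fin_cases i <;> fin_cases j
      · simp [mat, Matrix.GeneralLinearGroup.mkOfDetNeZero]
      · simp [mat, Matrix.GeneralLinearGroup.mkOfDetNeZero]
      · exact hn.le
      · exact hn2
    · change ‖Matrix.det !![0, 1; C * ((p : ℚ_[p]) ^ s)⁻¹, D * (p : ℚ_[p]) ^ t]‖ = 1
      rw [Matrix.det_fin_two_of, zero_mul, zero_sub, norm_neg, one_mul, hn]
  · apply Units.ext
    change mat p (k * gamma p ^ (s + t)) =
      !![-(A * D - B * C) / C, A * ((p : ℚ_[p]) ^ t)⁻¹ / C; 0, ((p : ℚ_[p]) ^ t)⁻¹] *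
      !![0, 1; C * ((p : ℚ_[p]) ^ s)⁻¹, D * (p : ℚ_[p]) ^ t]
    rw [hm, hkm]
    ext i j
    fin_cases i <;> fin_cases j <;> simp [Matrix.mul_apply, Fin.sum_univ_two] <;> field_simp <;> ring

lemma aux_conj (k : GL (Fin 2) ℚ_[p]) (n : ℕ) (h : inI p n k) :
    inK p ((gamma p ^ n)⁻¹ * k * gamma p ^ n) := by
  have hp : (p : ℝ) ≠ 0 := by exact_mod_cast (Fact.out : p.Prime).ne_zero
  have hp1 : (1 : ℝ) < p := by exact_mod_cast (Fact.out : p.Prime).one_lt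
  have hq : (p : ℚ_[p]) ≠ 0 := by exact_mod_cast (Fact.out : p.Prime).ne_zero
  obtain ⟨hK, hs⟩ := h
  have hle : ‖mat p k 1 0‖ ≤ ((p : ℝ) ^ n)⁻¹ := by
    rcases hs with rfl | hs
    · simpa using hK.1 1 0
    · simpa using hs.2.2
  have hinv : mat p ((gamma p ^ n)⁻¹) = !![(p : ℚ_[p]) ^ n, 0; 0, 1] := by
    have h1 : mat p ((gamma p ^ n)⁻¹) * mat p (gamma p ^ n) = 1 := by
      change mat p ((gamma p ^ n)⁻¹ * gamma p ^ n) = 1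
      rw [inv_mul_cancel]; rfl
    have h2 : mat p (gamma p ^ n) * !![(p : ℚ_[p]) ^ n, 0; 0, 1] = 1 := by
      rw [aux_gamma, Matrix.one_fin_two]; simp [hq]
    exact left_inv_eq_right_inv h1 h2
  have hmm : mat p ((gamma p ^ n)⁻¹ * k * gamma p ^ n) =
      mat p ((gamma p ^ n)⁻¹) * mat p k * mat p (gamma p ^ n) := rfl
  have hform : mat p ((gamma p ^ n)⁻¹ * k * gamma p ^ n) =
      !![mat p k 0 0, mat p k 0 1 * (p : ℚ_[p]) ^ n;
        mat p k 1 0 * ((p : ℚ_[p]) ^ n)⁻¹, mat p k 1 1] := by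
    rw [hmm, hinv, aux_gamma]
    conv_lhs => rw [Matrix.eta_fin_two (mat p k)]
    rw [Matrix.mul_fin_two, Matrix.mul_fin_two]
    congr 1
    simp only [mul_zero, zero_mul, add_zero, zero_add, one_mul, mul_one]
    rw [mul_comm _ (mat p k 0 0), mul_assoc, mul_inv_cancel₀ (pow_ne_zero n hq), mul_one,
      mul_comm _ (mat p k 0 1)]
  constructor
  · rw [hform]
    intro i j
    fin_cases i <;> fin_cases j
    · exact hK.1 0 0
    · change ‖mat p k 0 1 * (p : ℚ_[p]) ^ n‖ ≤ 1
      rw [norm_mul, norm_pow, Padic.norm_p]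
      exact mul_le_one₀ (hK.1 0 1) (by positivity)
        (pow_le_one₀ (by positivity) (inv_le_one_of_one_le₀ hp1.le))
    · change ‖mat p k 1 0 * ((p : ℚ_[p]) ^ n)⁻¹‖ ≤ 1
      rw [norm_mul, norm_inv, norm_pow, Padic.norm_p, inv_pow, inv_inv]
      have hpos : (0 : ℝ) < (p : ℝ) ^ n := by positivity
      calc _ ≤ ((p : ℝ) ^ n)⁻¹ * (p : ℝ) ^ n := by gcongr
        _ = 1 := inv_mul_cancel₀ hpos.ne'
    · exact hK.1 1 1
  · have h1 : (mat p ((gamma p ^ n)⁻¹ * k * gamma p ^ n)).det = (mat p k).det := by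
      rw [hform, Matrix.det_fin_two_of, Matrix.det_fin_two]
      field_simp
    rw [h1]; exact hK.2

/-- Lemma «calcul-NR», second part: difference formulas for
`γ^r · v - α γ^{r-1} · v` and `γ^r · v - β γ^{r-1} · v`, where `v` is the
normalized new vector of the unramified principal series `Ind_B^G (μ ⊗ μ')`. -/
theorem stmt1 (μ μ' : ℚ_[p]ˣ →* ℂˣ)
    (hμ : Unramified p μ) (hμ' : Unramified p μ')
    (α β : ℂ)
    (hα : α = ((μ (pu p) : ℂ))⁻¹ * (Real.sqrt p : ℂ))
    (hβ : β = ((μ' (pu p) : ℂ))⁻¹ / (Real.sqrt p : ℂ))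
    (v : GL (Fin 2) ℚ_[p] → ℂ)
    (hvB : ∀ (b g : GL (Fin 2) ℚ_[p]) (a d : ℚ_[p]ˣ),
      mat p b 1 0 = 0 → mat p b 0 0 = a → mat p b 1 1 = d →
      v (b * g) = (μ a : ℂ) * (μ' d : ℂ) *
        (Real.sqrt ‖(a : ℚ_[p]) / (d : ℚ_[p])‖ : ℂ) * v g)
    (hvK : ∀ (g k : GL (Fin 2) ℚ_[p]), inK p k → v (g * k) = v g)
    (hv1 : v 1 = 1) :
    ∀ (r : ℕ), 1 ≤ r → ∀ (k : GL (Fin 2) ℚ_[p]),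
      -- (a)
      ((∀ s : ℕ, s + 1 ≤ r → inI p s k → ¬ inI p (s + 1) k →
          v (k * gamma p ^ r) - α * v (k * gamma p ^ (r - 1)) =
            α ^ s * β ^ (r - s) - α ^ (s + 1) * β ^ (r - 1 - s)) ∧
        (inI p r k →
          v (k * gamma p ^ r) - α * v (k * gamma p ^ (r - 1)) = 0)) ∧
      -- (b)
      ((inI p r k →
          v (k * gamma p ^ r) - β * v (k * gamma p ^ (r - 1)) =
            α ^ r * (1 - β / α)) ∧
        (inK p k → ¬ inI p r k →
          v (k * gamma p ^ r) - β * v (k * gamma p ^ (r - 1)) = 0)) := by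
  have hBB : ∀ (b g : GL (Fin 2) ℚ_[p]) (a d : ℚ_[p]ˣ) (s t : ℕ),
      mat p b 1 0 = 0 → mat p b 0 0 = a → mat p b 1 1 = d →
      ‖(a : ℚ_[p])‖ = (p : ℝ) ^ s → ‖(d : ℚ_[p])‖ = (p : ℝ) ^ t →
      v (b * g) = α ^ s * β ^ t * v g := by
    intro b g a d s t h1 h2 h3 h4 h5
    rw [hvB b g a d h1 h2 h3, aux_B p μ μ' hμ hμ' α β hα hβ a d s t h4 h5]
  have hq : (p : ℚ_[p]) ≠ 0 := by exact_mod_cast (Fact.out : p.Prime).ne_zero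
  have hA : ∀ (n : ℕ) (k : GL (Fin 2) ℚ_[p]), inI p n k → v (k * gamma p ^ n) = α ^ n := by
    intro n k h
    have e : k * gamma p ^ n = gamma p ^ n * ((gamma p ^ n)⁻¹ * k * gamma p ^ n) := by group
    rw [e, hvK _ _ (aux_conj p k n h)]
    have := hBB (gamma p ^ n) 1 (Units.mk0 _ (inv_ne_zero (pow_ne_zero n hq))) 1 n 0
      (by rw [aux_gamma]; rfl) (by rw [aux_gamma]; rfl) (by rw [aux_gamma]; rfl)
      (by simp) (by simp)
    rw [mul_one, hv1] at this
    simpa using this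
  have hBs : ∀ (n s : ℕ) (k : GL (Fin 2) ℚ_[p]), s ≤ n → inI p s k → ¬ inI p (s + 1) k →
      v (k * gamma p ^ n) = α ^ s * β ^ (n - s) := by
    intro n s k hsn h h'
    obtain ⟨b, k', a, d, h1, h2, h3, h4, h5, h6, h7⟩ :=
      aux_decomp p k s n hsn h.1 (aux_c p k s h h')
    rw [h7, hvK _ _ h6]
    have := hBB b 1 a d s (n - s) h1 h2 h3 h4 h5
    rw [mul_one, hv1] at this
    simpa using this
  have hmono : ∀ (n : ℕ) (k : GL (Fin 2) ℚ_[p]), inI p (n + 1) k → inI p n k := by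
    rintro n k ⟨hK, h | h⟩
    · omega
    · refine ⟨hK, Or.inr ⟨h.1, h.2.1, h.2.2.trans ?_⟩⟩
      have hp1 : (1 : ℝ) ≤ p := by exact_mod_cast (Fact.out : p.Prime).one_lt.le
      exact zpow_le_zpow_right₀ hp1 (by push_cast; omega)
  have hα0 : α ≠ 0 := by
    rw [hα]
    have : (0 : ℝ) < p := by exact_mod_cast (Fact.out : p.Prime).pos
    refine mul_ne_zero (inv_ne_zero (Units.ne_zero _)) ?_
    exact_mod_cast (Real.sqrt_pos.2 this).ne'
  intro r hr k
  obtain ⟨m, rfl⟩ := Nat.exists_eq_add_of_le' hr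
  simp only [Nat.add_sub_cancel]
  refine ⟨⟨?_, ?_⟩, ?_, ?_⟩
  · intro s hs h h'
    rw [hBs _ s k (by omega) h h', hBs m s k (by omega) h h']
    ring
  · intro h
    rw [hA _ k h, hA m k (hmono m k h)]
    ring
  · intro h
    rw [hA _ k h, hA m k (hmono m k h)]
    field_simp
    ring
  · intro hK h
    have hex : ∃ s, s ≤ m ∧ inI p s k ∧ ¬ inI p (s + 1) k := by
      by_contra hcon
      push Not at hcon
      have : ∀ j, j ≤ m + 1 → inI p j k := by
        intro j
        induction j with
        | zero => exact fun _ => ⟨hK, Or.inl rfl⟩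
        | succ j ih => exact fun hj => hcon j (by omega) (ih (by omega))
      exact h (this _ le_rfl)
    obtain ⟨s, hs, h1, h2⟩ := hex
    rw [hBs _ s k (by omega) h1 h2, hBs m s k hs h1 h2, Nat.sub_add_comm hs]
    ring
end
end

section
/- Let n >= 1 be an integer, let mu' : Q_p^* -> C^* be an unramified group homomorphism and mu : Q_p^* -> C^* any group homomorphism, and set alpha = mu(p)^{-1} * sqrt(p) and beta = mu'(p)^{-1} / sqrt(p). Let v : G -> C be a function such that: (i) v(b*g) = mu(a) * mu'(d) * |a/d|^{1/2} * v(g) for every b = [[a,b0],[0,d]] in B and g in G; (ii) v(g*k) = mu(d) * mu'(d) * v(g) for every g in G and every k in I_n whose (2,2) entry is d; (iii) v(k) = 0 for every k in I; (iv) v([[1,0],[1,1]]) = 1. Then for every integer r >= 0 and every k in K: if k lies in I_s \ I_{s+1} for some 0 <= s <= r and has lower-left entry c, then v(k*gamma^r) = alpha^s * beta^{r-s} * mu(p^s * det(k) / c); and if k lies in I_{r+1} then v(k*gamma^r) = 0. Moreover, for every r >= 1: v(k*gamma^r) - beta * v(k*gamma^{r-1}) = alpha^r * mu(p^r * det(k)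 / c) if k lies in I_r \ I_{r+1} with lower-left entry c, and equals 0 for all other k in K. -/
open Matrix

noncomputable section

variable (p : ℕ) [Fact p.Prime]

/-- The element `[[1,0],[1,1]]` of `GL₂(ℚ_p)`. -/
def lowerOne : GL (Fin 2) ℚ_[p] :=
  Matrix.GeneralLinearGroup.mkOfDetNeZero !![(1 : ℚ_[p]), 0; 1, 1] (by
    simp [Matrix.det_fin_two_of])

theorem mat_gamma_pow (r : ℕ) :
    mat p (gamma p ^ r) = !![((p : ℚ_[p]) ^ r)⁻¹, 0; 0, 1] := by
  induction r with
  | zero => ext i j; fin_cases i <;> fin_cases j <;> simp [mat]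
  | succ r ih =>
    have h : mat p (gamma p ^ (r + 1)) = mat p (gamma p ^ r) * mat p (gamma p) := by
      rw [pow_succ]; rfl
    have h2 : mat p (gamma p) = !![(p : ℚ_[p])⁻¹, 0; 0, 1] := rfl
    rw [h, ih, h2]
    ext i j; fin_cases i <;> fin_cases j <;> simp [Matrix.mul_apply, pow_succ, mul_comm]

theorem mat_mul (g h : GL (Fin 2) ℚ_[p]) : mat p (g * h) = mat p g * mat p h := rfl

theorem mat_inj {g h : GL (Fin 2) ℚ_[p]} (e : mat p g = mat p h) : g = h := Units.ext e

theorem norm_c (s : ℕ) (k : GL (Fin 2) ℚ_[p]) (h1 : inI p s k) (h2 : ¬ inI p (s + 1) k) :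
    ‖mat p k 1 0‖ = (p : ℝ) ^ (-(s : ℤ)) := by
  obtain ⟨hK, h⟩ := h1
  have hle : ‖mat p k 1 0‖ ≤ (p : ℝ) ^ (-(s : ℤ)) := by
    rcases h with h | h
    · subst h; simpa using hK.1 1 0
    · exact h.2.2
  refine le_antisymm hle ?_
  by_contra! hlt
  have hle' : ‖mat p k 1 0‖ ≤ (p : ℝ) ^ (-((s + 1 : ℕ) : ℤ)) := by
    rw [Padic.norm_le_pow_iff_norm_lt_pow_add_one]
    have e : -((s + 1 : ℕ) : ℤ) + 1 = -(s : ℤ) := by push_cast; ring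
    rw [e]; exact hlt
  apply h2
  refine ⟨hK, Or.inr ?_⟩
  have hp1 : (1 : ℝ) < p := by exact_mod_cast (Fact.out : p.Prime).one_lt
  have hc1 : ‖mat p k 1 0‖ < 1 := by
    refine hlt.trans_le ?_
    exact zpow_le_one_of_nonpos₀ hp1.le (by omega)
  have hdet := hK.2
  rw [Matrix.det_fin_two, sub_eq_add_neg] at hdet
  have hmax := Padic.nonarchimedean (mat p k 0 0 * mat p k 1 1) (-(mat p k 0 1 * mat p k 1 0))
  rw [hdet, norm_neg, norm_mul, norm_mul] at hmax
  have ha := hK.1 0 0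
  have hb := hK.1 0 1
  have hd := hK.1 1 1
  have hbc : ‖mat p k 0 1‖ * ‖mat p k 1 0‖ < 1 := by
    nlinarith [norm_nonneg (mat p k 0 1), norm_nonneg (mat p k 1 0)]
  rcases le_max_iff.1 hmax with h | h
  · refine ⟨?_, ?_, hle'⟩
    · nlinarith [norm_nonneg (mat p k 0 0), norm_nonneg (mat p k 1 1)]
    · nlinarith [norm_nonneg (mat p k 0 0), norm_nonneg (mat p k 1 1)]
  · linarith

theorem v_big (n : ℕ) (μ μ' : ℚ_[p]ˣ →* ℂˣ)
    (v : GL (Fin 2) ℚ_[p] → ℂ)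
    (hvB : ∀ (b g : GL (Fin 2) ℚ_[p]) (a d : ℚ_[p]ˣ),
      mat p b 1 0 = 0 → mat p b 0 0 = a → mat p b 1 1 = d →
      v (b * g) = (μ a : ℂ) * (μ' d : ℂ) *
        (Real.sqrt ‖(a : ℚ_[p]) / (d : ℚ_[p])‖ : ℂ) * v g)
    (hvI : ∀ (g k : GL (Fin 2) ℚ_[p]) (d : ℚ_[p]ˣ),
      inI p n k → mat p k 1 1 = d →
      v (g * k) = (μ d : ℂ) * (μ' d : ℂ) * v g)
    (hv1 : v (lowerOne p) = 1)
    (g : GL (Fin 2) ℚ_[p]) (A C : ℚ_[p]ˣ) (hC : mat p g 1 0 = C)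
    (hA : (A : ℚ_[p]) = (mat p g).det / C) (hd : ‖mat p g 1 1‖ ≤ ‖(C : ℚ_[p])‖) :
    v g = (μ A : ℂ) * (μ' C : ℂ) * (Real.sqrt ‖(A : ℚ_[p]) / (C : ℚ_[p])‖ : ℂ) := by
  have hC0 : (C : ℚ_[p]) ≠ 0 := C.ne_zero
  have hA0 : (A : ℚ_[p]) ≠ 0 := A.ne_zero
  let b : GL (Fin 2) ℚ_[p] := Matrix.GeneralLinearGroup.mkOfDetNeZero
    !![(A : ℚ_[p]), mat p g 0 0 - A; 0, C] (by simp [Matrix.det_fin_two_of])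
  let k : GL (Fin 2) ℚ_[p] := Matrix.GeneralLinearGroup.mkOfDetNeZero
    !![(1 : ℚ_[p]), mat p g 1 1 / C - 1; 0, 1] (by simp [Matrix.det_fin_two_of])
  have mb : mat p b = !![(A : ℚ_[p]), mat p g 0 0 - A; 0, C] := rfl
  have mk : mat p k = !![(1 : ℚ_[p]), mat p g 1 1 / C - 1; 0, 1] := rfl
  have ml : mat p (lowerOne p) = !![(1 : ℚ_[p]), 0; 1, 1] := rfl
  have hg : g = b * lowerOne p * k := by
    apply mat_inj
    rw [mat_mul, mat_mul, mb, mk, ml]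
    rw [Matrix.det_fin_two, hC] at hA
    ext i j
    fin_cases i <;> fin_cases j <;> simp [Matrix.mul_apply, hC]
    · rw [hA]; field_simp; ring
    · field_simp; ring
  have hk : inI p n k := by
    have hdC : ‖mat p g 1 1 / C‖ ≤ 1 := by
      rw [norm_div]; exact div_le_one_of_le₀ hd (norm_nonneg _)
    have hy : ‖mat p g 1 1 / C - 1‖ ≤ 1 := by
      rw [sub_eq_add_neg]
      refine (Padic.nonarchimedean _ _).trans ?_
      simp only [norm_neg, norm_one]
      exact max_le hdC le_rfl
    refine ⟨⟨?_, ?_⟩, Or.inr ⟨?_, ?_, ?_⟩⟩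
    · intro i j
      rw [mk]
      fin_cases i <;> fin_cases j <;> simp [hy]
    all_goals rw [mk]; simp [Matrix.det_fin_two_of]
  conv_lhs => rw [hg]
  rw [hvI _ k 1 hk (by rw [mk]; simp), hvB b _ A C (by rw [mb]; simp) (by rw [mb]; simp)
    (by rw [mb]; simp), hv1]
  simp

theorem main_big (n : ℕ)
    (μ μ' : ℚ_[p]ˣ →* ℂˣ) (hμ' : Unramified p μ')
    (α β : ℂ)
    (hα : α = ((μ (pu p) : ℂ))⁻¹ * (Real.sqrt p : ℂ))
    (hβ : β = ((μ' (pu p) : ℂ))⁻¹ / (Real.sqrt p : ℂ))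
    (v : GL (Fin 2) ℚ_[p] → ℂ)
    (hvB : ∀ (b g : GL (Fin 2) ℚ_[p]) (a d : ℚ_[p]ˣ),
      mat p b 1 0 = 0 → mat p b 0 0 = a → mat p b 1 1 = d →
      v (b * g) = (μ a : ℂ) * (μ' d : ℂ) *
        (Real.sqrt ‖(a : ℚ_[p]) / (d : ℚ_[p])‖ : ℂ) * v g)
    (hvI : ∀ (g k : GL (Fin 2) ℚ_[p]) (d : ℚ_[p]ˣ),
      inI p n k → mat p k 1 1 = d →
      v (g * k) = (μ d : ℂ) * (μ' d : ℂ) * v g)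
    (hv1 : v (lowerOne p) = 1) (r : ℕ) (k : GL (Fin 2) ℚ_[p])
    (s : ℕ) (u : ℚ_[p]ˣ) (hs : s ≤ r) (h1 : inI p s k) (h2 : ¬ inI p (s + 1) k)
    (hu : (u : ℚ_[p]) = (p : ℚ_[p]) ^ s * (mat p k).det / mat p k 1 0) :
    v (k * gamma p ^ r) = α ^ s * β ^ (r - s) * (μ u : ℂ) := by
  obtain ⟨t, rfl⟩ := Nat.exists_eq_add_of_le hs
  have hc := norm_c p s k h1 h2
  have hp0 : (p : ℚ_[p]) ≠ 0 := (pu p).ne_zero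
  have hpR : (0 : ℝ) < p := by exact_mod_cast (Fact.out : p.Prime).pos
  have hp1 : (1 : ℝ) ≤ p := by exact_mod_cast (Fact.out : p.Prime).one_lt.le
  have hc0 : mat p k 1 0 ≠ 0 := by
    rw [← norm_pos_iff, hc]; positivity
  -- c = p^s * ε
  let ε : ℚ_[p]ˣ := Units.mk0 (mat p k 1 0 / (p : ℚ_[p]) ^ s) (div_ne_zero hc0 (pow_ne_zero _ hp0))
  have hε : (ε : ℚ_[p]) = mat p k 1 0 / (p : ℚ_[p]) ^ s := rfl
  have hεn : ‖(ε : ℚ_[p])‖ = 1 := by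
    rw [hε, norm_div, hc, norm_pow, Padic.norm_p]
    simp [hpR.ne']
  have hpu : ((pu p : ℚ_[p]ˣ) : ℚ_[p]) = p := rfl
  have hun : ‖(u : ℚ_[p])‖ = 1 := by
    rw [hu, norm_div, norm_mul, hc, h1.1.2, norm_pow, Padic.norm_p]
    simp [hpR.ne']
  have mg : mat p (k * gamma p ^ (s + t)) = mat p k * !![((p : ℚ_[p]) ^ (s + t))⁻¹, 0; 0, 1] := by
    rw [mat_mul, mat_gamma_pow]
  have key := v_big p n μ μ' v hvB hvI hv1 (k * gamma p ^ (s + t))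
    (u * (pu p ^ s)⁻¹) (ε * (pu p ^ t)⁻¹) ?_ ?_ ?_
  · rw [key]
    have hnorm : ‖((u * (pu p ^ s)⁻¹ : ℚ_[p]ˣ) : ℚ_[p]) / ((ε * (pu p ^ t)⁻¹ : ℚ_[p]ˣ) : ℚ_[p])‖
        = (p : ℝ) ^ s / (p : ℝ) ^ t := by
      simp [hun, hεn, hpu]
    rw [hnorm, Real.sqrt_div (by positivity)]
    have hsq : ∀ m : ℕ, Real.sqrt ((p : ℝ) ^ m) = Real.sqrt p ^ m := fun m => by
      rw [Real.sqrt_eq_iff_mul_self_eq (by positivity) (by positivity), ← mul_pow,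
        Real.mul_self_sqrt hpR.le]
    rw [hsq, hsq, hα, hβ]
    simp only [map_mul, map_inv, map_pow, hμ' ε hεn, Nat.add_sub_cancel_left]
    push_cast
    simp only [mul_pow, div_pow, inv_pow, one_mul]
    ring
  · rw [mg]
    simp [Matrix.mul_apply, hε, hpu]
    field_simp
    ring
  · rw [mg, Matrix.det_mul, Matrix.det_fin_two_of]
    simp [hε, hpu, hu]
    field_simp
    try ring
  · rw [mg]
    have : ‖((ε * (pu p ^ t)⁻¹ : ℚ_[p]ˣ) : ℚ_[p])‖ = (p : ℝ) ^ t := by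
      simp [hεn, hpu]
    rw [this]
    simp [Matrix.mul_apply]
    exact (h1.1.1 1 1).trans (one_le_pow₀ hp1)

theorem main_zero (μ μ' : ℚ_[p]ˣ →* ℂˣ)
    (v : GL (Fin 2) ℚ_[p] → ℂ)
    (hvB : ∀ (b g : GL (Fin 2) ℚ_[p]) (a d : ℚ_[p]ˣ),
      mat p b 1 0 = 0 → mat p b 0 0 = a → mat p b 1 1 = d →
      v (b * g) = (μ a : ℂ) * (μ' d : ℂ) *
        (Real.sqrt ‖(a : ℚ_[p]) / (d : ℚ_[p])‖ : ℂ) * v g)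
    (hvsupp : ∀ k : GL (Fin 2) ℚ_[p], inI p 1 k → v k = 0)
    (r : ℕ) (k : GL (Fin 2) ℚ_[p]) (h : inI p (r + 1) k) : v (k * gamma p ^ r) = 0 := by
  obtain ⟨⟨hK, hdet⟩, h | ⟨ha, hd, hc⟩⟩ := h
  · omega
  have hp0 : (p : ℚ_[p]) ≠ 0 := (pu p).ne_zero
  have hpR : (0 : ℝ) < p := by exact_mod_cast (Fact.out : p.Prime).pos
  have hp1 : (1 : ℝ) ≤ p := by exact_mod_cast (Fact.out : p.Prime).one_lt.le
  have mg := mat_gamma_pow p r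
  let k' : GL (Fin 2) ℚ_[p] := (gamma p ^ r)⁻¹ * (k * gamma p ^ r)
  have hk : k * gamma p ^ r = gamma p ^ r * k' := by simp [k']
  have e : mat p k * mat p (gamma p ^ r) = mat p (gamma p ^ r) * mat p k' := by
    rw [← mat_mul, ← mat_mul, hk]
  have edet : (mat p k').det = (mat p k).det := by
    have := congrArg Matrix.det e
    rw [Matrix.det_mul, Matrix.det_mul, mul_comm] at this
    refine (mul_left_cancel₀ ?_ this).symm
    rw [mg]; simp [Matrix.det_fin_two_of, hp0]
  rw [mg] at e
  have e00 := congrFun (congrFun e 0) 0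
  have e01 := congrFun (congrFun e 0) 1
  have e10 := congrFun (congrFun e 1) 0
  have e11 := congrFun (congrFun e 1) 1
  simp [Matrix.mul_apply] at e00 e01 e10 e11
  have f00 : mat p k' 0 0 = mat p k 0 0 := by
    field_simp at e00; simpa [hp0] using e00.symm
  have f01 : mat p k' 0 1 = p ^ r * mat p k 0 1 := by
    rw [e01]; field_simp
  have c10 : ‖mat p k' 1 0‖ ≤ (p : ℝ) ^ (-((1 : ℕ) : ℤ)) := by
    rw [← e10, norm_mul, norm_inv, norm_pow, Padic.norm_p]
    calc _ ≤ (p : ℝ) ^ (-((r + 1 : ℕ) : ℤ)) * ((p : ℝ)⁻¹ ^ r)⁻¹ := by gcongr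
      _ = _ := by
        rw [_root_.zpow_neg, _root_.zpow_neg, zpow_natCast, zpow_natCast, pow_succ, inv_pow, inv_inv]
        field_simp
  have z : v k' = 0 := by
    apply hvsupp
    refine ⟨⟨?_, by rw [edet, hdet]⟩, Or.inr ⟨by rw [f00, ha], by rw [← e11, hd], c10⟩⟩
    intro i j
    fin_cases i <;> fin_cases j
    · simp [f00, ha]
    · simp only [Fin.zero_eta, Fin.mk_one, f01, norm_mul, norm_pow, Padic.norm_p]
      exact mul_le_one₀ (pow_le_one₀ (by positivity) (inv_le_one_of_one_le₀ hp1))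
        (norm_nonneg _) (hK 0 1)
    · exact c10.trans (zpow_le_one_of_nonpos₀ hp1 (by omega))
    · simp [← e11, hd]
  rw [hk, hvB (gamma p ^ r) k' ((pu p ^ r)⁻¹) 1 (by rw [mg]; simp) (by rw [mg]; simp [pu])
    (by rw [mg]; simp), z, mul_zero]

theorem inI_mono {r s : ℕ} (hrs : r ≤ s) (k : GL (Fin 2) ℚ_[p]) (h : inI p s k) : inI p r k := by
  have hp1 : (1 : ℝ) ≤ p := by exact_mod_cast (Fact.out : p.Prime).one_lt.le
  obtain ⟨hK, h | ⟨ha, hd, hc⟩⟩ := h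
  · exact ⟨hK, Or.inl (by omega)⟩
  · exact ⟨hK, Or.inr ⟨ha, hd, hc.trans (zpow_le_zpow_right₀ hp1 (by omega))⟩⟩

/-- Lemma «calcul-SP2»: values of the translates `γ^r · v` of the new vector
`v` of the ramified principal series `Ind_B^G (μ ⊗ μ')` with `μ'` unramified
and conductor `n = cond(μ) ≥ 1`. -/
theorem stmt3 (n : ℕ) (hn : 1 ≤ n)
    (μ μ' : ℚ_[p]ˣ →* ℂˣ) (hμ' : Unramified p μ')
    (α β : ℂ)
    (hα : α = ((μ (pu p) : ℂ))⁻¹ * (Real.sqrt p : ℂ))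
    (hβ : β = ((μ' (pu p) : ℂ))⁻¹ / (Real.sqrt p : ℂ))
    (v : GL (Fin 2) ℚ_[p] → ℂ)
    (hvB : ∀ (b g : GL (Fin 2) ℚ_[p]) (a d : ℚ_[p]ˣ),
      mat p b 1 0 = 0 → mat p b 0 0 = a → mat p b 1 1 = d →
      v (b * g) = (μ a : ℂ) * (μ' d : ℂ) *
        (Real.sqrt ‖(a : ℚ_[p]) / (d : ℚ_[p])‖ : ℂ) * v g)
    (hvI : ∀ (g k : GL (Fin 2) ℚ_[p]) (d : ℚ_[p]ˣ),
      inI p n k → mat p k 1 1 = d →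
      v (g * k) = (μ d : ℂ) * (μ' d : ℂ) * v g)
    (hvsupp : ∀ k : GL (Fin 2) ℚ_[p], inI p 1 k → v k = 0)
    (hv1 : v (lowerOne p) = 1) :
    ∀ (r : ℕ) (k : GL (Fin 2) ℚ_[p]),
      -- values of `γ^r · v`
      ((∀ (s : ℕ) (u : ℚ_[p]ˣ), s ≤ r → inI p s k → ¬ inI p (s + 1) k →
          (u : ℚ_[p]) = (p : ℚ_[p]) ^ s * (mat p k).det / mat p k 1 0 →
          v (k * gamma p ^ r) = α ^ s * β ^ (r - s) * (μ u : ℂ)) ∧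
        (inI p (r + 1) k → v (k * gamma p ^ r) = 0)) ∧
      -- values of `γ^r · v - β γ^{r-1} · v`, for `r ≥ 1`
      (1 ≤ r →
        (∀ u : ℚ_[p]ˣ, inI p r k → ¬ inI p (r + 1) k →
          (u : ℚ_[p]) = (p : ℚ_[p]) ^ r * (mat p k).det / mat p k 1 0 →
          v (k * gamma p ^ r) - β * v (k * gamma p ^ (r - 1)) =
            α ^ r * (μ u : ℂ)) ∧
        (inK p k → ¬ (inI p r k ∧ ¬ inI p (r + 1) k) →
          v (k * gamma p ^ r) - β * v (k * gamma p ^ (r - 1)) = 0)) := by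
  have big := main_big p n μ μ' hμ' α β hα hβ v hvB hvI hv1
  have zer := main_zero p μ μ' v hvB hvsupp
  intro r k
  refine ⟨⟨fun s u hs h1 h2 hu => big r k s u hs h1 h2 hu, zer r k⟩, fun hr => ?_⟩
  obtain ⟨m, rfl⟩ : ∃ m, r = m + 1 := ⟨r - 1, by omega⟩
  simp only [Nat.add_sub_cancel]
  refine ⟨fun u h1 h2 hu => ?_, fun hK hn' => ?_⟩
  · rw [big _ k _ u le_rfl h1 h2 hu, zer m k h1]; simp
  · by_cases h1 : inI p (m + 1) k
    · have h2 : inI p (m + 1 + 1) k := by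
        by_contra h2; exact hn' ⟨h1, h2⟩
      rw [zer _ k h1, zer _ k h2]; simp
    · obtain ⟨s, hs, hs1, hs2⟩ : ∃ s, s ≤ m ∧ inI p s k ∧ ¬ inI p (s + 1) k := by
        by_contra! hcon
        have : ∀ s, s ≤ m + 1 → inI p s k := by
          intro s
          induction s with
          | zero => intro _; exact ⟨hK, Or.inl rfl⟩
          | succ s ih => intro h; exact hcon s (by omega) (ih (by omega))
        exact h1 (this _ le_rfl)
      have hc := norm_c p s k hs1 hs2
      have hpR : (0 : ℝ) < p := by exact_mod_cast (Fact.out : p.Prime).pos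
      have hc0 : mat p k 1 0 ≠ 0 := by
        rw [← norm_pos_iff, hc]; positivity
      have hd0 : (mat p k).det ≠ 0 := by
        rw [← norm_pos_iff, hK.2]; exact one_pos
      have hp0 : (p : ℚ_[p]) ≠ 0 := (pu p).ne_zero
      let u : ℚ_[p]ˣ := Units.mk0 ((p : ℚ_[p]) ^ s * (mat p k).det / mat p k 1 0)
        (div_ne_zero (mul_ne_zero (pow_ne_zero _ hp0) hd0) hc0)
      rw [big (m + 1) k s u (by omega) hs1 hs2 rfl, big m k s u hs hs1 hs2 rfl,
        Nat.succ_sub hs, pow_succ]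
      ring
end
end

section
/- K is the disjoint union of I and (B ∩ K) * w * I; that is, K \ I = {b * w * i : b in B ∩ K, i in I}, and this set is disjoint from I. -/
open Matrix

noncomputable section

variable (p : ℕ) [Fact p.Prime]

/-- The Weyl element `w = [[0,1],[1,0]]` of `GL₂(ℚ_p)`. -/
def wEl : GL (Fin 2) ℚ_[p] :=
  Matrix.GeneralLinearGroup.mkOfDetNeZero !![(0 : ℚ_[p]), 1; 1, 0] (by
    simp [Matrix.det_fin_two_of])

theorem aux_mul_inK {g h : GL (Fin 2) ℚ_[p]} (hg : inK p g) (hh : inK p h) :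
    inK p (g * h) := by
  have e : mat p (g * h) = mat p g * mat p h := rfl
  refine ⟨fun i j => ?_, ?_⟩
  · rw [e, Matrix.mul_apply, Fin.sum_univ_two]
    refine (Padic.nonarchimedean _ _).trans (max_le ?_ ?_)
    all_goals
      rw [norm_mul]
      exact mul_le_one₀ (hg.1 _ _) (norm_nonneg _) (hh.1 _ _)
  · rw [e, Matrix.det_mul, norm_mul, hg.2, hh.2, one_mul]

theorem aux_mat_w : mat p (wEl p) = !![(0 : ℚ_[p]), 1; 1, 0] := rfl

theorem aux_w_inK : inK p (wEl p) := by
  refine ⟨fun i j => ?_, ?_⟩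
  · rw [aux_mat_w]
    fin_cases i <;> fin_cases j <;> simp
  · rw [aux_mat_w]
    simp [Matrix.det_fin_two_of]

theorem aux_inI_lt {g : GL (Fin 2) ℚ_[p]} (h : inI p 1 g) : ‖mat p g 1 0‖ < 1 := by
  rcases h with ⟨_, h | ⟨_, _, h⟩⟩
  · exact absurd h one_ne_zero
  · have := (Padic.norm_le_pow_iff_norm_lt_pow_add_one (mat p g 1 0) (-((1 : ℕ) : ℤ))).1 h
    simpa using this

theorem aux_lt_inI {g : GL (Fin 2) ℚ_[p]} (hk : inK p g) (h : ‖mat p g 1 0‖ < 1) :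
    inI p 1 g := by
  have h3 : ‖mat p g 0 0‖ * ‖mat p g 1 1‖ = 1 := by
    have hd := hk.2
    rw [Matrix.det_fin_two] at hd
    by_contra hne
    have h1 : ‖mat p g 0 0 * mat p g 1 1‖ < 1 := by
      rw [norm_mul]
      exact lt_of_le_of_ne (mul_le_one₀ (hk.1 _ _) (norm_nonneg _) (hk.1 _ _)) hne
    have h2 : ‖-(mat p g 0 1 * mat p g 1 0)‖ < 1 := by
      rw [norm_neg, norm_mul]
      exact mul_lt_one_of_nonneg_of_lt_one_right (hk.1 _ _) (norm_nonneg _) h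
    have := Padic.nonarchimedean (mat p g 0 0 * mat p g 1 1) (-(mat p g 0 1 * mat p g 1 0))
    rw [← sub_eq_add_neg, hd] at this
    exact absurd this (not_le.2 (max_lt h1 h2))
  have a := hk.1 0 0
  have d := hk.1 1 1
  have a0 := norm_nonneg (mat p g 0 0)
  have d0 := norm_nonneg (mat p g 1 1)
  refine ⟨hk, Or.inr ⟨by nlinarith, by nlinarith, ?_⟩⟩
  rw [Padic.norm_le_pow_iff_norm_lt_pow_add_one]
  simpa using h

theorem aux_bwi {b i : GL (Fin 2) ℚ_[p]} (hb0 : mat p b 1 0 = 0) (hb : inK p b)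
    (hi : inI p 1 i) : inK p (b * wEl p * i) ∧ ¬ inI p 1 (b * wEl p * i) := by
  refine ⟨aux_mul_inK p (aux_mul_inK p hb (aux_w_inK p)) hi.1, fun h => ?_⟩
  have h1 := aux_inI_lt p h
  have e : mat p (b * wEl p * i) = mat p b * mat p (wEl p) * mat p i := rfl
  have e2 : mat p (b * wEl p * i) 1 0 = mat p b 1 1 * mat p i 0 0 := by
    rw [e, aux_mat_w]
    simp [Matrix.mul_apply, Fin.sum_univ_two, hb0]
  have hbd := hb.2
  rw [Matrix.det_fin_two, hb0, mul_zero, sub_zero, norm_mul] at hbd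
  have a := hb.1 0 0
  have d := hb.1 1 1
  have a0 := norm_nonneg (mat p b 0 0)
  have d0 := norm_nonneg (mat p b 1 1)
  have hd : ‖mat p b 1 1‖ = 1 := by nlinarith
  rcases hi with ⟨_, h | ⟨hi0, _, _⟩⟩
  · exact absurd h one_ne_zero
  · rw [e2, norm_mul, hd, hi0] at h1
    norm_num at h1

theorem aux_exists {k : GL (Fin 2) ℚ_[p]} (hk : inK p k) (hn : ¬ inI p 1 k) :
    ∃ b i : GL (Fin 2) ℚ_[p], (mat p b 1 0 = 0 ∧ inK p b) ∧ inI p 1 i ∧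
      k = b * wEl p * i := by
  have hc : ‖mat p k 1 0‖ = 1 :=
    le_antisymm (hk.1 _ _) (not_lt.1 fun h => hn (aux_lt_inI p hk h))
  have hc0 : mat p k 1 0 ≠ 0 := by
    intro h
    rw [h, norm_zero] at hc
    exact zero_ne_one hc
  have hdet := hk.2
  rw [Matrix.det_fin_two] at hdet
  have ha := hk.1 0 0
  have hb := hk.1 0 1
  have hd := hk.1 1 1
  obtain ⟨a, ea⟩ : ∃ a, mat p k 0 0 = a := ⟨_, rfl⟩
  obtain ⟨b, eb⟩ : ∃ a, mat p k 0 1 = a := ⟨_, rfl⟩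
  obtain ⟨c, ec⟩ : ∃ a, mat p k 1 0 = a := ⟨_, rfl⟩
  obtain ⟨d, ed⟩ : ∃ a, mat p k 1 1 = a := ⟨_, rfl⟩
  rw [ea, eb, ec, ed] at hdet
  rw [ec] at hc hc0
  rw [ea] at ha
  rw [eb] at hb
  rw [ed] at hd
  have hB : (!![b - a * d / c, a; 0, c]).det = -(a * d - b * c) := by
    rw [Matrix.det_fin_two_of]
    field_simp
    ring
  have hB0 : (!![b - a * d / c, a; 0, c]).det ≠ 0 := by
    rw [← norm_ne_zero_iff, hB, norm_neg, hdet]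
    exact one_ne_zero
  have hI : (!![1, d / c; 0, 1]).det = 1 := by simp [Matrix.det_fin_two_of]
  have hx : ‖b - a * d / c‖ ≤ 1 := by
    have : ‖b - a * d / c‖ * ‖c‖ = 1 := by
      rw [← norm_mul, ← hdet, ← norm_neg (a * d - b * c)]
      congr 1
      field_simp
      ring
    rw [hc, mul_one] at this
    exact this.le
  let B := Matrix.GeneralLinearGroup.mkOfDetNeZero !![b - a * d / c, a; 0, c] hB0
  let J := Matrix.GeneralLinearGroup.mkOfDetNeZero !![1, d / c; 0, 1]
    (by rw [hI]; exact one_ne_zero)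
  have eB : mat p B = !![b - a * d / c, a; 0, c] := rfl
  have eJ : mat p J = !![1, d / c; 0, 1] := rfl
  refine ⟨B, J, ⟨by simp [eB], fun i j => ?_, ?_⟩, aux_lt_inI p ⟨fun i j => ?_, ?_⟩ ?_, ?_⟩
  · rw [eB]
    fin_cases i <;> fin_cases j <;> simp [hx, ha, hc]
  · rw [eB, hB, norm_neg, hdet]
  · rw [eJ]
    fin_cases i <;> fin_cases j <;> simp [hc, hd]
  · rw [eJ, hI, norm_one]
  · simp [eJ]
  · apply Units.ext
    change mat p k = mat p B * mat p (wEl p) * mat p J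
    rw [eB, eJ, aux_mat_w]
    ext i j
    fin_cases i <;> fin_cases j <;> simp [Matrix.mul_apply, Fin.sum_univ_two, ea, eb, ec, ed]
    all_goals
      field_simp
      try ring

/-- `K` is the disjoint union of `I` and `(B ∩ K) w I`: the set
`{b * w * i : b ∈ B ∩ K, i ∈ I}` equals `K \ I` and is disjoint from `I`. -/
theorem stmt10 :
    ({k : GL (Fin 2) ℚ_[p] | inK p k ∧ ¬ inI p 1 k} =
      {k : GL (Fin 2) ℚ_[p] |
        ∃ b i : GL (Fin 2) ℚ_[p], (mat p b 1 0 = 0 ∧ inK p b) ∧ inI p 1 i ∧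
          k = b * wEl p * i}) ∧
    Disjoint
      {k : GL (Fin 2) ℚ_[p] |
        ∃ b i : GL (Fin 2) ℚ_[p], (mat p b 1 0 = 0 ∧ inK p b) ∧ inI p 1 i ∧
          k = b * wEl p * i}
      {k : GL (Fin 2) ℚ_[p] | inI p 1 k} := by
  refine ⟨Set.ext fun k => ⟨fun h => aux_exists p h.1 h.2, ?_⟩, Set.disjoint_left.2 ?_⟩
  · rintro ⟨b, i, ⟨hb0, hb⟩, hi, rfl⟩
    exact aux_bwi p hb0 hb hi
  · rintro _ ⟨b, i, ⟨hb0, hb⟩, hi, rfl⟩ h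
    exact (aux_bwi p hb0 hb hi).2 h
end
end
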